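/- Let A ∈ ℝ^{d×d}, B ∈ ℝ^{d×m}, C ∈ ℝ^{k×d}, σ ∈ ℝ^{d×n}, R ∈ ℝ^{m×m} symmetric positive definite, and suppose there exists a symmetric positive semidefinite matrix R̃ ∈ ℝ^{m×m} with B R⁻¹ Bᵀ = σσᵀ + B R̃ Bᵀ. Let S : [0,T] → ℝ^{d×d} be a continuously differentiable symmetric-positive-definite-matrix-valued function satisfying (d/dt)S_t = A S_t + S_t Aᵀ + S_t CᵀC S_t − B R⁻¹ Bᵀ, and let ρ(t,z) := (2π)^{−d/2} (det S_t)^{−1/2} exp(−½ zᵀ S_t⁻¹ z). Then for all t ∈ [0,T] and z ∈ ℝ^d, ∂ρ/∂t (t,z) = −∇_z·( ρ(t,·) ( A(·) + ½ S_t CᵀC (·) ) )(z) − ½ tr( (B R̃ Bᵀ + σσᵀ) ∇_z²ρ(t,z) ); that is, the Fokker–Planck equation of the mean-field process holds with the correction term identically zero and exploration-noise diffusion matrix B R̃ Bᵀ. -/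

import Mathlib

open Matrix

/-- Partial derivative in direction `i`. -/
noncomputable def pd {d : ℕ} (i : Fin d) (f : (Fin d → ℝ) → ℝ) (x : Fin d → ℝ) : ℝ :=
  fderiv ℝ f x (Pi.single i 1)

/-- Spatial gradient. -/
noncomputable def grad {d : ℕ} (f : (Fin d → ℝ) → ℝ) (x : Fin d → ℝ) : Fin d → ℝ :=
  fun i => pd i f x

/-- Spatial Hessian as a matrix. -/
noncomputable def hess {d : ℕ} (f : (Fin d → ℝ) → ℝ) (x : Fin d → ℝ) :
    Matrix (Fin d) (Fin d) ℝ :=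
  Matrix.of fun i j => pd i (fun y => pd j f y) x

/-- Divergence of a vector field. -/
noncomputable def dvg {d : ℕ} (v : (Fin d → ℝ) → (Fin d → ℝ)) (x : Fin d → ℝ) : ℝ :=
  ∑ i, pd i (fun y => v y i) x

/-!
Write `w = S⁻¹z`. Jacobi's formula and the derivative of the inverse give
`∂ρ/∂t = ½ρ(w·S'w - tr(S⁻¹S'))`. In terms of the drift matrix `M = A + ½SCᵀC` and the noise
covariance `D = BR̃Bᵀ + σσᵀ` the Riccati equation is the Lyapunov equation `S' = MS + SMᵀ - D`, so
`∂ρ/∂t` is the sum of a drift part `ρ(w·Mz - tr M)` and a noise part `-½ρ(w·Dw - tr(DS⁻¹))`. Since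
`∇ρ = -ρw` and `∇²ρ = ρ(wwᵀ - S⁻¹)`, these are `-∇·(ρMz)` and `-½ tr(D∇²ρ)`.
-/

theorem sum_det_updateRow {ι 𝕜 : Type*} [Fintype ι] [DecidableEq ι] [CommRing 𝕜]
    (M N : Matrix ι ι 𝕜) : ∑ i, (M.updateRow i (N.row i)).det = (N * M.adjugate).trace := by
  refine Finset.sum_congr rfl fun i _ => ?_
  rw [← cramer_transpose_apply, cramer_eq_adjugate_mulVec, ← adjugate_transpose,
    mulVec_transpose]
  rfl

section MatrixCurves

variable {𝕜 ι κ : Type*} [NontriviallyNormedField 𝕜] {t : 𝕜}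

theorem hasDerivAt_matrix_iff [Finite κ] {S : 𝕜 → Matrix ι κ 𝕜} {S' : Matrix ι κ 𝕜} :
    HasDerivAt S S' t ↔ ∀ i j, HasDerivAt (fun s => S s i j) (S' i j) t :=
  have := Fintype.ofFinite κ
  hasDerivAt_pi.trans (forall_congr' fun _ => hasDerivAt_pi)

variable [Fintype ι] [Fintype κ]

theorem hasDerivAt_dotProduct_mulVec {S : 𝕜 → Matrix ι κ 𝕜} {S' : Matrix ι κ 𝕜}
    (hS : HasDerivAt S S' t) (x : ι → 𝕜) (y : κ → 𝕜) :
    HasDerivAt (fun s => x ⬝ᵥ S s *ᵥ y) (x ⬝ᵥ S' *ᵥ y) t := by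
  simp only [dotProduct, mulVec]
  exact .fun_sum fun i _ =>
    (HasDerivAt.fun_sum fun j _ => (hasDerivAt_matrix_iff.1 hS i j).mul_const (y j)).const_mul (x i)

variable [DecidableEq ι] {S : 𝕜 → Matrix ι ι 𝕜} {S' : Matrix ι ι 𝕜}

theorem hasDerivAt_matrix_det (hS : HasDerivAt S S' t) :
    HasDerivAt (fun s => (S s).det) ((S t).adjugate * S').trace t := by
  let detRows : ContinuousMultilinearMap 𝕜 (fun _ : ι => ι → 𝕜) 𝕜 :=
    ⟨detRowAlternating.toMultilinearMap, continuous_id.matrix_det⟩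
  have hrows : detRows.linearDeriv (S t) S' = ∑ i, ((S t).updateRow i (S'.row i)).det :=
    detRows.linearDeriv_apply _ _
  rw [trace_mul_comm, ← sum_det_updateRow, ← hrows]
  exact (detRows.hasFDerivAt (S t)).comp_hasDerivAt t hS

open scoped Matrix.Norms.Operator in
theorem hasDerivAt_matrix_inv [CompleteSpace 𝕜] (hS : HasDerivAt S S' t) (hdet : IsUnit (S t).det) :
    HasDerivAt (fun s => (S s)⁻¹) (-((S t)⁻¹ * S' * (S t)⁻¹)) t := by
  -- Instance search does not identify the uniformity of the operator norm with the entrywise one.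
  have : @CompleteSpace (Matrix ι ι 𝕜) PseudoMetricSpace.toUniformSpace :=
    FiniteDimensional.complete 𝕜 _
  obtain ⟨u, hu⟩ := (isUnit_iff_isUnit_det _).2 hdet
  have hinv := hasFDerivAt_ringInverse (𝕜 := 𝕜) u
  rw [hu] at hinv
  have hcomp := hinv.comp_hasDerivAt t hS
  simp only [Function.comp_def, ← nonsing_inv_eq_ringInverse, coe_units_inv, hu,
    _root_.neg_apply, ContinuousLinearMap.mulLeftRight_apply] at hcomp
  exact hcomp

end MatrixCurves

section LyapunovEquation

variable {ι 𝕜 : Type*} [Fintype ι] [CommRing 𝕜] {S : Matrix ι ι 𝕜}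

theorem trace_inv_mul_lyapunov [DecidableEq ι] (hdet : IsUnit S.det) (M D : Matrix ι ι 𝕜) :
    (S⁻¹ * (M * S + S * Mᵀ - D)).trace = 2 * M.trace - (D * S⁻¹).trace := by
  rw [mul_sub, mul_add, trace_sub, trace_add, trace_mul_comm, mul_nonsing_inv_cancel_right S M hdet,
    nonsing_inv_mul_cancel_left S _ hdet, trace_transpose, trace_mul_comm _ D, two_mul]

theorem dotProduct_lyapunov_mulVec (hS : S.IsSymm) (M D : Matrix ι ι 𝕜) (w : ι → 𝕜) :
    w ⬝ᵥ (M * S + S * Mᵀ - D) *ᵥ w = 2 * (w ⬝ᵥ M *ᵥ (S *ᵥ w)) - w ⬝ᵥ D *ᵥ w := by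
  have htransp : w ⬝ᵥ (S * Mᵀ) *ᵥ w = w ⬝ᵥ (M * S) *ᵥ w := by
    rw [dotProduct_mulVec, ← mulVec_transpose, dotProduct_comm, transpose_mul, transpose_transpose,
      hS.eq]
  rw [sub_mulVec, add_mulVec, dotProduct_sub, dotProduct_add, htransp, mulVec_mulVec, two_mul]

end LyapunovEquation

section PartialDerivatives

variable {d : ℕ} {ι : Type*} {x : Fin d → ℝ}

theorem pd_neg (i : Fin d) (f : (Fin d → ℝ) → ℝ) (x : Fin d → ℝ) :
    pd i (fun y => -f y) x = -pd i f x := by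
  simp [pd, fderiv_fun_neg]

theorem pd_mul (i : Fin d) {f g : (Fin d → ℝ) → ℝ}
    (hf : DifferentiableAt ℝ f x) (hg : DifferentiableAt ℝ g x) :
    pd i (fun y => f y * g y) x = f x * pd i g x + g x * pd i f x := by
  simp [pd, fderiv_fun_mul hf hg]

theorem pd_dotProduct [Fintype ι] (i : Fin d) {v w : (Fin d → ℝ) → ι → ℝ}
    (hv : DifferentiableAt ℝ v x) (hw : DifferentiableAt ℝ w x) :
    pd i (fun y => v y ⬝ᵥ w y) x =
      v x ⬝ᵥ (fun j => pd i (fun y => w y j) x) + w x ⬝ᵥ fun j => pd i (fun y => v y j) x := by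
  rw [differentiableAt_pi] at hv hw
  simp only [dotProduct, ← Finset.sum_add_distrib, ← pd_mul i (hv _) (hw _)]
  simp only [pd, fderiv_fun_sum fun j _ => (hv j).fun_mul (hw j), _root_.sum_apply]

theorem differentiable_mulVec (M : Matrix ι (Fin d) ℝ) :
    Differentiable ℝ fun y : Fin d → ℝ => M *ᵥ y :=
  (LinearMap.toContinuousLinearMap M.mulVecLin).differentiable

theorem pd_mulVec (M : Matrix ι (Fin d) ℝ) (i : Fin d) (j : ι) (x : Fin d → ℝ) :
    pd i (fun y => (M *ᵥ y) j) x = M j i := by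
  have hM : HasFDerivAt (fun y => (M *ᵥ y) j) _ x :=
    ((ContinuousLinearMap.proj j).comp (LinearMap.toContinuousLinearMap M.mulVecLin)).hasFDerivAt
  simp [pd, hM.fderiv]

theorem pd_dotProduct_mulVec (P : Matrix (Fin d) (Fin d) ℝ) (i : Fin d) (x : Fin d → ℝ) :
    pd i (fun y => y ⬝ᵥ P *ᵥ y) x = (x ᵥ* P) i + (P *ᵥ x) i := by
  have hcoord : (fun j => pd i (fun y => y j) x) = Pi.single i 1 := by
    ext j
    simpa [one_apply, Pi.single_apply] using pd_mulVec (1 : Matrix (Fin d) (Fin d) ℝ) i j x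
  rw [pd_dotProduct i differentiableAt_fun_id (differentiable_mulVec P x), hcoord,
    dotProduct_single_one]
  simp only [pd_mulVec]
  rfl

theorem dvg_smul {f : (Fin d → ℝ) → ℝ} {v : (Fin d → ℝ) → Fin d → ℝ}
    (hf : DifferentiableAt ℝ f x) (hv : DifferentiableAt ℝ v x) :
    dvg (fun y => f y • v y) x = f x * dvg v x + v x ⬝ᵥ grad f x := by
  simp only [dvg, Pi.smul_apply, smul_eq_mul, pd_mul _ hf (differentiableAt_pi.1 hv _),
    Finset.sum_add_distrib, Finset.mul_sum]
  rfl

theorem dvg_mulVec (M : Matrix (Fin d) (Fin d) ℝ) (x : Fin d → ℝ) :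
    dvg (fun y => M *ᵥ y) x = M.trace := by
  simp only [dvg, pd_mulVec, trace, diag_apply]

end PartialDerivatives

/-- The density of the centred Gaussian law with covariance matrix `S`. Definiteness is
not built in: the formula is studied for every symmetric `S` of positive determinant. -/
noncomputable def gaussianDensity {d : ℕ} (S : Matrix (Fin d) (Fin d) ℝ) (z : Fin d → ℝ) : ℝ :=
  (2 * Real.pi) ^ (-(d : ℝ) / 2) * S.det ^ (-(1 : ℝ) / 2) *
    Real.exp (-(1 / 2) * (z ⬝ᵥ S⁻¹ *ᵥ z))

section GaussianDensity

variable {d : ℕ}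

section Spatial

variable {S : Matrix (Fin d) (Fin d) ℝ}

theorem hasFDerivAt_gaussianDensity (S : Matrix (Fin d) (Fin d) ℝ) (x : Fin d → ℝ) :
    HasFDerivAt (gaussianDensity S)
      ((gaussianDensity S x * -(1 / 2)) • fderiv ℝ (fun y => y ⬝ᵥ S⁻¹ *ᵥ y) x) x := by
  have hquad : DifferentiableAt ℝ (fun y => y ⬝ᵥ S⁻¹ *ᵥ y) x := by
    simp only [dotProduct, mulVec]
    fun_prop
  refine ((hquad.hasFDerivAt.const_mul _).exp.const_mul _).congr_fderiv ?_
  simp only [smul_smul, gaussianDensity, mul_assoc]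

theorem differentiable_gaussianDensity (S : Matrix (Fin d) (Fin d) ℝ) :
    Differentiable ℝ (gaussianDensity S) :=
  fun x => (hasFDerivAt_gaussianDensity S x).differentiableAt

theorem grad_gaussianDensity (hS : S.IsSymm) (x : Fin d → ℝ) :
    grad (gaussianDensity S) x = -(gaussianDensity S x • S⁻¹ *ᵥ x) := by
  ext i
  have hquad := pd_dotProduct_mulVec S⁻¹ i x
  rw [← mulVec_transpose, transpose_nonsing_inv, hS.eq] at hquad
  rw [grad, pd, (hasFDerivAt_gaussianDensity S x).fderiv, _root_.smul_apply, ← pd, hquad]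
  simp only [Pi.neg_apply, Pi.smul_apply, smul_eq_mul]
  ring

theorem dvg_gaussianDensity_smul_mulVec (hS : S.IsSymm) (M : Matrix (Fin d) (Fin d) ℝ)
    (x : Fin d → ℝ) :
    dvg (fun y => gaussianDensity S y • M *ᵥ y) x =
      gaussianDensity S x * (M.trace - S⁻¹ *ᵥ x ⬝ᵥ M *ᵥ x) := by
  rw [dvg_smul (differentiable_gaussianDensity S x) (differentiable_mulVec M x), dvg_mulVec,
    grad_gaussianDensity hS, dotProduct_neg, dotProduct_smul, dotProduct_comm, smul_eq_mul]
  ring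

theorem hess_gaussianDensity (hS : S.IsSymm) (x : Fin d → ℝ) :
    hess (gaussianDensity S) x =
      gaussianDensity S x • (vecMulVec (S⁻¹ *ᵥ x) (S⁻¹ *ᵥ x) - S⁻¹) := by
  ext i j
  have hpd : ∀ i y, pd i (gaussianDensity S) y = -(gaussianDensity S y * (S⁻¹ *ᵥ y) i) :=
    fun i y => congrFun (grad_gaussianDensity hS y) i
  have hinv : (S⁻¹)ᵀ = S⁻¹ := by rw [transpose_nonsing_inv, hS.eq]
  have hentry : S⁻¹ j i = S⁻¹ i j := IsSymm.apply hinv i j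
  simp only [hess, of_apply, hpd, pd_neg]
  rw [pd_mul i (differentiable_gaussianDensity S x)
    (differentiableAt_pi.1 (differentiable_mulVec S⁻¹ x) j), pd_mulVec, hpd, hentry]
  simp only [Matrix.smul_apply, Matrix.sub_apply, vecMulVec_apply, smul_eq_mul]
  ring

theorem trace_mul_hess_gaussianDensity (hS : S.IsSymm) (D : Matrix (Fin d) (Fin d) ℝ)
    (x : Fin d → ℝ) :
    (D * hess (gaussianDensity S) x).trace =
      gaussianDensity S x * (S⁻¹ *ᵥ x ⬝ᵥ D *ᵥ (S⁻¹ *ᵥ x) - (D * S⁻¹).trace) := by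
  rw [hess_gaussianDensity hS, Matrix.mul_smul, trace_smul, mul_sub, trace_sub, mul_vecMulVec,
    trace_vecMulVec, dotProduct_comm, smul_eq_mul]

end Spatial

variable {S : ℝ → Matrix (Fin d) (Fin d) ℝ} {t : ℝ}

theorem hasDerivAt_gaussianDensity {S' : Matrix (Fin d) (Fin d) ℝ} (hS : HasDerivAt S S' t)
    (hsymm : (S t).IsSymm) (hdet : 0 < (S t).det) (z : Fin d → ℝ) :
    HasDerivAt (fun s => gaussianDensity (S s) z)
      (gaussianDensity (S t) z *
        (1 / 2 * ((S t)⁻¹ *ᵥ z ⬝ᵥ S' *ᵥ ((S t)⁻¹ *ᵥ z) - ((S t)⁻¹ * S').trace))) t := by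
  have hamplitude := ((hasDerivAt_matrix_det hS).rpow_const (p := -(1 : ℝ) / 2)
    (.inl hdet.ne')).const_mul ((2 * Real.pi) ^ (-(d : ℝ) / 2))
  have hexponent := (hasDerivAt_dotProduct_mulVec
    (hasDerivAt_matrix_inv hS hdet.ne'.isUnit) z z).const_mul (-(1 / 2))
  have hadj : (S t).adjugate = (S t).det • (S t)⁻¹ := by
    rw [inv_def, smul_smul, Ring.mul_inverse_cancel _ hdet.ne'.isUnit, one_smul]
  have hquad : z ⬝ᵥ ((S t)⁻¹ * S' * (S t)⁻¹) *ᵥ z = (S t)⁻¹ *ᵥ z ⬝ᵥ S' *ᵥ ((S t)⁻¹ *ᵥ z) := by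
    rw [← mulVec_mulVec, ← mulVec_mulVec, dotProduct_mulVec, ← mulVec_transpose,
      transpose_nonsing_inv, hsymm.eq]
  refine (hamplitude.fun_mul hexponent.exp).congr_deriv ?_
  rw [hadj, Real.rpow_sub_one hdet.ne', neg_mulVec, dotProduct_neg, hquad, Matrix.smul_mul,
    trace_smul, smul_eq_mul, gaussianDensity]
  field_simp
  ring

theorem hasDerivAt_gaussianDensity_of_lyapunov {M D : Matrix (Fin d) (Fin d) ℝ}
    (hS : HasDerivAt S (M * S t + S t * Mᵀ - D) t)
    (hsymm : (S t).IsSymm) (hdet : 0 < (S t).det) (z : Fin d → ℝ) :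
    HasDerivAt (fun s => gaussianDensity (S s) z)
      (-(dvg (fun y => gaussianDensity (S t) y • M *ᵥ y) z)
        - (1 / 2) * (D * hess (gaussianDensity (S t)) z).trace) t := by
  refine (hasDerivAt_gaussianDensity hS hsymm hdet z).congr_deriv ?_
  have hinv : S t *ᵥ ((S t)⁻¹ *ᵥ z) = z := by
    rw [mulVec_mulVec, mul_nonsing_inv _ hdet.ne'.isUnit, one_mulVec]
  rw [trace_inv_mul_lyapunov hdet.ne'.isUnit, dotProduct_lyapunov_mulVec hsymm, hinv,
    dvg_gaussianDensity_smul_mulVec hsymm, trace_mul_hess_gaussianDensity hsymm]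
  ring

theorem lqg_correction_free_fokker_planck_general {A Q D S' : Matrix (Fin d) (Fin d) ℝ}
    (hQ : Q.IsSymm) (hS : HasDerivAt S S' t)
    (hric : S' = A * S t + S t * Aᵀ + S t * Q * S t - D)
    (hsymm : (S t).IsSymm) (hdet : 0 < (S t).det) (z : Fin d → ℝ) :
    HasDerivAt (fun s => gaussianDensity (S s) z)
      (-(dvg (fun y => gaussianDensity (S t) y •
            (A *ᵥ y + (1 / 2 : ℝ) • ((S t * Q) *ᵥ y))) z)
        - (1 / 2) * (D * hess (gaussianDensity (S t)) z).trace) t := by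
  have hlyap : S' = (A + (1 / 2 : ℝ) • (S t * Q)) * S t +
      S t * (A + (1 / 2 : ℝ) • (S t * Q))ᵀ - D := by
    simp only [hric, transpose_add, transpose_smul, transpose_mul, hQ.eq, hsymm.eq, Matrix.add_mul,
      Matrix.mul_add, Matrix.smul_mul, Matrix.mul_smul, Matrix.mul_assoc]
    module
  rw [hlyap] at hS
  simpa only [add_mulVec, smul_mulVec] using
    hasDerivAt_gaussianDensity_of_lyapunov hS hsymm hdet z

end GaussianDensity

/-- under the compatibility condition `BR⁻¹Bᵀ = σσᵀ + BR̃Bᵀ`, the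
mean-field Fokker-Planck equation in the LQG case holds with the correction term
identically zero and exploration-noise diffusion matrix `BR̃Bᵀ`. -/
theorem lqg_correction_free_fokker_planck
    (d m k n : ℕ) (T : ℝ) (hT : 0 < T)
    (A : Matrix (Fin d) (Fin d) ℝ) (B : Matrix (Fin d) (Fin m) ℝ)
    (C : Matrix (Fin k) (Fin d) ℝ) (σ : Matrix (Fin d) (Fin n) ℝ)
    (R : Matrix (Fin m) (Fin m) ℝ) (hR : R.PosDef)
    (Rtil : Matrix (Fin m) (Fin m) ℝ) (hRtil : Rtil.PosSemidef)
    (hcomp : B * R⁻¹ * Bᵀ = σ * σᵀ + B * Rtil * Bᵀ)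
    (S S' : ℝ → Matrix (Fin d) (Fin d) ℝ)
    (hSpd : ∀ t ∈ Set.Icc (0 : ℝ) T, (S t).PosDef)
    (hS : ∀ t ∈ Set.Icc (0 : ℝ) T, ∀ i j, HasDerivAt (fun s => S s i j) (S' t i j) t)
    (hS'cont : ∀ i j, ContinuousOn (fun t => S' t i j) (Set.Icc (0 : ℝ) T))
    (hric : ∀ t ∈ Set.Icc (0 : ℝ) T,
      S' t = A * S t + S t * Aᵀ + S t * (Cᵀ * C) * S t - B * R⁻¹ * Bᵀ)
    (ρ : ℝ → (Fin d → ℝ) → ℝ)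
    (hρ : ∀ t z, ρ t z =
      (2 * Real.pi) ^ (-(d : ℝ) / 2) * (S t).det ^ (-(1 : ℝ) / 2) *
        Real.exp (-(1 / 2) * (z ⬝ᵥ (S t)⁻¹.mulVec z))) :
    ∀ t ∈ Set.Icc (0 : ℝ) T, ∀ z,
      deriv (fun s => ρ s z) t =
        -(dvg (fun y => ρ t y •
            (A.mulVec y + (1 / 2 : ℝ) • ((S t * (Cᵀ * C)).mulVec y))) z)
        - (1 / 2) * ((B * Rtil * Bᵀ + σ * σᵀ) * hess (ρ t) z).trace := by
  obtain rfl : ρ = fun t => gaussianDensity (S t) := funext₂ hρ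
  exact fun t ht z => (lqg_correction_free_fokker_planck_general
    (by rw [IsSymm, transpose_mul, transpose_transpose]) (hasDerivAt_matrix_iff.2 (hS t ht))
    (by rw [hric t ht, hcomp, add_comm (σ * σᵀ)])
    (isHermitian_iff_isSymm.1 (hSpd t ht).isHermitian) (hSpd t ht).det_pos z).deriv
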